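/- arXiv:2007.07952 — 2 statements merged into one kernel-verified Lean document; each statement's English description precedes it below -/
import Mathlib

section
/- Let n ≥ 1, d ∈ ℕ be even, and let f : ℝⁿ → [0,+∞) be an integrable log-concave function with 0 < ∫_{ℝⁿ} f(x) dx, ‖f‖_∞ = f(0) = 1. Then there exist t₁ ∈ [1,+∞) and a nonnegative homogeneous polynomial g₁ of degree d on ℝⁿ with |G₁(g₁)| < +∞ such that f(x) ≤ t₁·exp(−g₁(x)^{1/d}) for all x ∈ ℝⁿ, and for every t ≥ 1 and every nonnegative homogeneous polynomial g of degree d on ℝⁿ satisfying f(x) ≤ t·exp(−g(x)^{1/d}) for all x ∈ ℝⁿ, one has t₁·∫_{ℝⁿ} exp(−g₁(x)^{1/d}) dx ≤ t·∫_{ℝⁿ} exp(−g(x)^{1/d}) dx. -/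
open MeasureTheory

noncomputable section

/-- `G₁(g) = {x ∈ ℝⁿ : g(x) ≤ 1}`, the sublevel set of a polynomial at level 1. -/
def G1 {n : ℕ} (g : MvPolynomial (Fin n) ℝ) : Set (Fin n → ℝ) :=
  {x | MvPolynomial.eval x g ≤ 1}

open Filter Topology Metric

section ConvexAnalysis

variable {E : Type*} [NormedAddCommGroup E] [NormedSpace ℝ E] {f : E → ℝ}

/-- Superlevel sets of a log-concave function are convex. -/
theorem convex_superlevel_of_logConcave
    (hf : ∀ x y : E, ∀ θ : ℝ, 0 ≤ θ → θ ≤ 1 →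
      f x ^ (1 - θ) * f y ^ θ ≤ f ((1 - θ) • x + θ • y)) {δ : ℝ} (hδ : 0 < δ) :
    Convex ℝ {x | δ ≤ f x} := by
  intro x hx y hy a b ha hb hab
  obtain rfl : a = 1 - b := by linarith
  refine le_trans ?_ (hf x y b hb (by linarith))
  calc δ = δ ^ (1 - b) * δ ^ b := by rw [← Real.rpow_add hδ]; simp
    _ ≤ f x ^ (1 - b) * f y ^ b := by
      have h1 : δ ≤ f x := hx
      have h2 : δ ≤ f y := hy
      have h3 : 0 ≤ f x := hδ.le.trans h1
      gcongr

variable [FiniteDimensional ℝ E] [MeasurableSpace E] [BorelSpace E]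

/-- A function with exponential decay has finite integral. -/
theorem lintegral_exp_neg_mul_norm_lt_top (μ : Measure E) [μ.IsAddHaarMeasure] {c : ℝ}
    (hc : 0 < c) : ∫⁻ x, ENNReal.ofReal (Real.exp (-(c * ‖x‖))) ∂μ < ⊤ := by
  set m : ℕ := Module.finrank ℝ E + 1
  set D : ℝ := Real.exp c * m.factorial / c ^ m
  have hD : 0 ≤ D := by positivity
  have hpt : ∀ x : E, Real.exp (-(c * ‖x‖)) ≤ D * (1 + ‖x‖) ^ (-(m : ℝ)) := by
    intro x
    have h1 : 0 < 1 + ‖x‖ := by positivity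
    have h := Real.pow_div_factorial_le_exp (c * (1 + ‖x‖)) (by positivity) m
    rw [mul_add, mul_one, Real.exp_add] at h
    rw [Real.exp_neg, Real.rpow_neg h1.le, Real.rpow_natCast]
    have h2 : (c * (1 + ‖x‖)) ^ m / m.factorial ≤ Real.exp c * Real.exp (c * ‖x‖) := by
      rw [mul_add, mul_one]; exact h
    rw [mul_pow, div_le_iff₀ (by positivity)] at h2
    rw [inv_le_iff_one_le_mul₀ (by positivity)]
    have : D * ((1 + ‖x‖) ^ m)⁻¹ * Real.exp (c * ‖x‖)
        = (Real.exp c * Real.exp (c * ‖x‖) * m.factorial) / (c ^ m * (1 + ‖x‖) ^ m) := by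
      simp only [D]; field_simp
    rw [this, le_div_iff₀ (by positivity), one_mul]
    exact h2
  calc ∫⁻ x, ENNReal.ofReal (Real.exp (-(c * ‖x‖))) ∂μ
      ≤ ∫⁻ x, ENNReal.ofReal D * ENNReal.ofReal ((1 + ‖x‖) ^ (-(m : ℝ))) ∂μ := by
        refine lintegral_mono fun x => ?_
        rw [← ENNReal.ofReal_mul hD]
        exact ENNReal.ofReal_le_ofReal (hpt x)
    _ = ENNReal.ofReal D * ∫⁻ x, ENNReal.ofReal ((1 + ‖x‖) ^ (-(m : ℝ))) ∂μ :=
        lintegral_const_mul' _ _ ENNReal.ofReal_ne_top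
    _ < ⊤ := ENNReal.mul_lt_top ENNReal.ofReal_lt_top
        (finite_integral_one_add_norm (by simp [m]))

/-- A convex set of finite volume containing a ball is bounded. -/
theorem Convex.exists_norm_le_of_measure_lt_top (μ : Measure E) [μ.IsAddHaarMeasure] {K : Set E}
    (hK : Convex ℝ K) (hμ : μ K < ⊤) {y : E} {r : ℝ} (hr : 0 < r) (hy : closedBall y r ⊆ K) :
    ∃ R : ℝ, ∀ x ∈ K, ‖x‖ ≤ R := by
  set v : ENNReal := μ (ball (0 : E) (r / 2))
  have hv : 0 < v := measure_ball_pos μ _ (by positivity)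
  have : IsFiniteMeasure (μ.restrict K) := ⟨by simpa using hμ⟩
  obtain ⟨v', hv'0, hv'⟩ := exists_between hv
  obtain ⟨C, hC, hCv⟩ := isTightMeasureSet_iff_exists_isCompact_measure_compl_le.1
    (isTightMeasureSet_singleton (μ := μ.restrict K)) v' hv'0
  obtain ⟨R, hR⟩ := hC.isBounded.exists_norm_le
  refine ⟨‖y‖ + 2 * R + r, fun x hx => ?_⟩
  by_contra! hlt
  set p : E := (2⁻¹ : ℝ) • (x + y)
  have hp : 2 * ‖p‖ = ‖x + y‖ := by
    rw [norm_smul, Real.norm_of_nonneg (by norm_num)]; ring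
  have hxy : ‖x‖ ≤ ‖x + y‖ + ‖y‖ := by simpa using norm_sub_le (x + y) y
  have hsub : ball p (r / 2) ⊆ Cᶜ ∩ K := by
    intro z hz
    rw [mem_ball, dist_eq_norm] at hz
    refine ⟨fun hzC => ?_, ?_⟩
    · have h1 := hR z hzC
      have h2 : ‖p‖ ≤ ‖z‖ + ‖z - p‖ := by simpa using norm_sub_le z (z - p)
      linarith
    · have hw : y + (2 : ℝ) • (z - p) ∈ K := hy (by
        rw [mem_closedBall, dist_eq_norm, add_sub_cancel_left, norm_smul]
        norm_num; linarith)
      have := hK hx hw (show (0 : ℝ) ≤ 2⁻¹ by norm_num) (show (0 : ℝ) ≤ 2⁻¹ by norm_num)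
        (by norm_num)
      convert this using 1
      simp only [p]
      module
  have h1 : v ≤ μ (Cᶜ ∩ K) := by
    simp only [v]
    rw [← Measure.addHaar_ball_center μ p]
    exact measure_mono hsub
  have h2 := hCv _ rfl
  rw [Measure.restrict_apply hC.measurableSet.compl] at h2
  exact absurd (h1.trans h2) (not_le.2 hv')

/-- A log-concave function with positive integral is bounded below on some ball. -/
theorem exists_closedBall_le_of_logConcave (μ : Measure E) [μ.IsAddHaarMeasure]
    (hf0 : ∀ x, 0 ≤ f x)
    (hf : ∀ x y : E, ∀ θ : ℝ, 0 ≤ θ → θ ≤ 1 →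
      f x ^ (1 - θ) * f y ^ θ ≤ f ((1 - θ) • x + θ • y))
    (hpos : 0 < ∫ x, f x ∂μ) :
    ∃ δ : ℝ, 0 < δ ∧ ∃ (y : E) (r : ℝ), 0 < r ∧ ∀ x ∈ closedBall y r, δ ≤ f x := by
  by_contra! hcon
  have hnull : ∀ k : ℕ, μ {x | 1 / ((k : ℝ) + 1) ≤ f x} = 0 := by
    intro k
    have hk : (0 : ℝ) < 1 / ((k : ℝ) + 1) := by positivity
    have hconv := convex_superlevel_of_logConcave hf hk
    have hint : interior {x | 1 / ((k : ℝ) + 1) ≤ f x} = ∅ := by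
      by_contra hne
      obtain ⟨y, hy⟩ := Set.nonempty_iff_ne_empty.2 hne
      obtain ⟨r, hr, hsub⟩ := nhds_basis_closedBall.mem_iff.1 (mem_interior_iff_mem_nhds.1 hy)
      obtain ⟨x, hx, hlt⟩ := hcon _ hk y r hr
      exact absurd (hsub hx) (not_le.2 hlt)
    refine measure_mono_null ?_ (hconv.addHaar_frontier μ)
    rw [frontier, hint, Set.sdiff_empty]
    exact subset_closure
  have hae : f =ᵐ[μ] 0 := by
    have := ae_all_iff.2 fun k => measure_eq_zero_iff_ae_notMem.1 (hnull k)
    filter_upwards [this] with x hx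
    refine le_antisymm (le_of_not_gt fun hlt => ?_) (hf0 x)
    obtain ⟨k, hk⟩ := exists_nat_one_div_lt hlt
    exact hx k hk.le
  rw [integral_congr_ae hae] at hpos
  simp at hpos

/-- An integrable log-concave function with positive integral whose maximum is `f 0 = 1` decays
exponentially. -/
theorem exists_le_exp_neg_norm_of_logConcave (μ : Measure E) [μ.IsAddHaarMeasure]
    (hf0 : ∀ x, 0 ≤ f x) (hint : Integrable f μ)
    (hf : ∀ x y : E, ∀ θ : ℝ, 0 ≤ θ → θ ≤ 1 →
      f x ^ (1 - θ) * f y ^ θ ≤ f ((1 - θ) • x + θ • y))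
    (hpos : 0 < ∫ x, f x ∂μ) (hle : ∀ x, f x ≤ 1) (hf1 : f 0 = 1) :
    ∃ c : ℝ, 0 < c ∧ ∀ x, f x ≤ Real.exp 1 * Real.exp (-(c * ‖x‖)) := by
  have hray : ∀ x : E, ∀ θ : ℝ, 0 ≤ θ → θ ≤ 1 → f x ^ θ ≤ f (θ • x) := by
    intro x θ h0 h1
    simpa [hf1] using hf 0 x θ h0 h1
  obtain ⟨δ, hδ, y, r, hr, hball⟩ := exists_closedBall_le_of_logConcave μ hf0 hf hpos
  set K : Set E := {x | Real.exp (-1) ≤ f x}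
  have hKc : Convex ℝ K := convex_superlevel_of_logConcave hf (Real.exp_pos _)
  have hKm : μ K < ⊤ := hint.measure_ge_lt_top (Real.exp_pos _)
  set θ : ℝ := (1 + |Real.log δ|)⁻¹
  have hθ0 : 0 < θ := by positivity
  have hθ1 : θ ≤ 1 := inv_le_one_of_one_le₀ (by linarith [abs_nonneg (Real.log δ)])
  have hδθ : Real.exp (-1) ≤ δ ^ θ := by
    rw [Real.rpow_def_of_pos hδ, Real.exp_le_exp]
    have h1 : -(1 + |Real.log δ|) ≤ Real.log δ := by linarith [neg_abs_le (Real.log δ)]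
    have h2 : (1 + |Real.log δ|) * θ = 1 := mul_inv_cancel₀ (by positivity)
    nlinarith
  have hsub : closedBall (θ • y) (θ * r) ⊆ K := by
    intro z hz
    have hz' : θ⁻¹ • z ∈ closedBall y r := by
      rw [mem_closedBall, dist_eq_norm] at hz ⊢
      have : θ⁻¹ • z - y = θ⁻¹ • (z - θ • y) := by
        rw [smul_sub, inv_smul_smul₀ hθ0.ne']
      rw [this, norm_smul, Real.norm_of_nonneg (by positivity)]
      rwa [inv_mul_le_iff₀ hθ0]
    have h := hray (θ⁻¹ • z) θ hθ0.le hθ1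
    rw [smul_inv_smul₀ hθ0.ne'] at h
    exact hδθ.trans ((Real.rpow_le_rpow hδ.le (hball _ hz') hθ0.le).trans h)
  obtain ⟨R, hR⟩ := hKc.exists_norm_le_of_measure_lt_top μ hKm (by positivity) hsub
  set S : ℝ := |R| + 1
  have hS : 0 < S := by positivity
  refine ⟨S⁻¹, by positivity, fun x => ?_⟩
  rw [← Real.exp_add]
  by_cases hx : ‖x‖ ≤ S
  · refine (hle x).trans (Real.one_le_exp ?_)
    have : S⁻¹ * ‖x‖ ≤ 1 := by rwa [inv_mul_le_iff₀ hS, mul_one]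
    linarith
  push Not at hx
  have hx0 : 0 < ‖x‖ := hS.trans hx
  have hout : f ((S / ‖x‖) • x) < Real.exp (-1) := by
    by_contra! hge
    have h := hR _ hge
    rw [norm_smul, Real.norm_of_nonneg (by positivity), div_mul_cancel₀ _ hx0.ne'] at h
    linarith [le_abs_self R]
  have h := (hray x (S / ‖x‖) (by positivity) ((div_le_one hx0).2 hx.le)).trans hout.le
  have h' := Real.rpow_le_rpow (Real.rpow_nonneg (hf0 x) _) h
    (show 0 ≤ ‖x‖ / S by positivity)
  rw [← Real.rpow_mul (hf0 x), div_mul_div_cancel₀ hx0.ne', div_self hS.ne', Real.rpow_one,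
    ← Real.exp_mul] at h'
  refine h'.trans (Real.exp_le_exp.2 ?_)
  rw [inv_mul_eq_div]
  linarith

end ConvexAnalysis

section HomogeneousPolynomials

variable {n d : ℕ}

theorem MvPolynomial.IsHomogeneous.eval_smul_eq {g : MvPolynomial (Fin n) ℝ}
    (hg : g.IsHomogeneous d) (c : ℝ) (x : Fin n → ℝ) :
    MvPolynomial.eval (c • x) g = c ^ d * MvPolynomial.eval x g := by
  rw [MvPolynomial.eval_eq', MvPolynomial.eval_eq', Finset.mul_sum]
  refine Finset.sum_congr rfl fun s hs => ?_
  have hs' : ∑ i, s i = d := by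
    rw [← Finsupp.degree_eq_sum]
    rw [Finsupp.degree_eq_weight_one]
    exact hg (MvPolynomial.mem_support_iff.1 hs)
  simp only [Pi.smul_apply, smul_eq_mul, mul_pow, Finset.prod_mul_distrib,
    Finset.prod_pow_eq_pow_sum, hs']
  ring

/-- Homogeneous polynomials are parametrized linearly and injectively by a coordinate space. -/
theorem exists_linearMap_homogeneous (n d : ℕ) :
    ∃ (m : ℕ) (P : (Fin m → ℝ) →ₗ[ℝ] MvPolynomial (Fin n) ℝ), Function.Injective P ∧
      (∀ a, (P a).IsHomogeneous d) ∧
      ∀ g : MvPolynomial (Fin n) ℝ, g.IsHomogeneous d → ∃ a, P a = g := by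
  have : Module.Finite ℝ (MvPolynomial.homogeneousSubmodule (Fin n) ℝ d) :=
    Module.Finite.iff_fg.2 (MvPolynomial.homogeneousSubmodule_fg _ _ d)
  let e := (Module.finBasis ℝ (MvPolynomial.homogeneousSubmodule (Fin n) ℝ d)).equivFun
  refine ⟨_, (Submodule.subtype _).comp e.symm.toLinearMap, ?_, ?_, ?_⟩
  · exact Subtype.val_injective.comp e.symm.injective
  · intro a
    exact (e.symm a).2
  · intro g hg
    exact ⟨e ⟨g, hg⟩, by simp⟩

variable {m : ℕ} (P : (Fin m → ℝ) →ₗ[ℝ] MvPolynomial (Fin n) ℝ)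

theorem continuous_eval_apply (x : Fin n → ℝ) :
    Continuous fun a => MvPolynomial.eval x (P a) :=
  ((MvPolynomial.aeval (R := ℝ) x).toLinearMap.comp P).continuous_of_finiteDimensional

/-- Evaluation on a closed ball, as a linear map into continuous functions. -/
def evalOnBall (y : Fin n → ℝ) (r : ℝ) : (Fin m → ℝ) →ₗ[ℝ] C(closedBall y r, ℝ) where
  toFun a := ⟨fun x => MvPolynomial.eval x.1 (P a),
    (MvPolynomial.continuous_eval (P a)).comp continuous_subtype_val⟩
  map_add' a b := by ext; simp
  map_smul' c a := by ext; simp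

theorem exists_abs_eval_le (y : Fin n → ℝ) (r : ℝ) :
    ∃ B : ℝ, 0 ≤ B ∧ ∀ a, ∀ x ∈ closedBall y r, |MvPolynomial.eval x (P a)| ≤ B * ‖a‖ := by
  refine ⟨‖LinearMap.toContinuousLinearMap (evalOnBall P y r)‖,
    ContinuousLinearMap.opNorm_nonneg _, fun a x hx => ?_⟩
  exact (((evalOnBall P y r) a).norm_coe_le_norm ⟨x, hx⟩).trans
    ((LinearMap.toContinuousLinearMap (evalOnBall P y r)).le_opNorm a)

theorem exists_norm_le_of_abs_eval_le (hP : Function.Injective P) (y : Fin n → ℝ) {r : ℝ}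
    (hr : 0 < r) :
    ∃ K : ℝ, 0 ≤ K ∧ ∀ a, ∀ M : ℝ, 0 ≤ M →
      (∀ x ∈ closedBall y r, |MvPolynomial.eval x (P a)| ≤ M) → ‖a‖ ≤ K * M := by
  have hker : LinearMap.ker (evalOnBall P y r) = ⊥ := by
    rw [LinearMap.ker_eq_bot']
    intro a ha
    apply hP
    rw [map_zero]
    refine MvPolynomial.funext_set (fun i => Set.Icc (y i - r) (y i + r))
      (fun i => Set.Icc_infinite (by linarith)) fun x hx => ?_
    have hx' : x ∈ closedBall y r := by
      rw [mem_closedBall, dist_pi_le_iff hr.le]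
      intro i
      have := hx i (Set.mem_univ i)
      rw [Real.dist_eq, abs_le]
      constructor <;> linarith [this.1, this.2]
    simpa [evalOnBall] using congrArg (fun φ : C(closedBall y r, ℝ) => φ ⟨x, hx'⟩) ha
  obtain ⟨K, -, hK⟩ := LinearMap.exists_antilipschitzWith _ hker
  refine ⟨K, K.2, fun a M hM h => ?_⟩
  have h1 : ‖a‖ ≤ K * ‖evalOnBall P y r a‖ := by
    simpa using hK.le_mul_dist a 0
  refine h1.trans (mul_le_mul_of_nonneg_left ?_ K.2)
  exact (ContinuousMap.norm_le _ hM).2 fun x => h x.1 x.2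

end HomogeneousPolynomials

section Optimization

variable {n d : ℕ}

/-- The integrand `exp (-g ^ (1 / d))`, as an extended nonnegative function. -/
def expRoot (d : ℕ) (g : MvPolynomial (Fin n) ℝ) (x : Fin n → ℝ) : ENNReal :=
  ENNReal.ofReal (Real.exp (-(MvPolynomial.eval x g ^ ((1 : ℝ) / d))))

theorem measurable_expRoot (g : MvPolynomial (Fin n) ℝ) : Measurable (expRoot d g) := by
  have := (MvPolynomial.continuous_eval g).measurable
  unfold expRoot
  fun_prop

theorem volume_G1_lt_top {g : MvPolynomial (Fin n) ℝ} (hg : ∀ x, 0 ≤ MvPolynomial.eval x g)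
    (hfin : ∫⁻ x, expRoot d g x < ⊤) : volume (G1 g) < ⊤ := by
  set ε : ENNReal := ENNReal.ofReal (Real.exp (-1))
  have hε : ε ≠ 0 := by simp [ε, Real.exp_pos]
  have hsub : G1 g ⊆ {x | ε ≤ expRoot d g x} := by
    intro x hx
    refine ENNReal.ofReal_le_ofReal (Real.exp_le_exp.2 (neg_le_neg ?_))
    exact Real.rpow_le_one (hg x) hx (by positivity)
  refine (measure_mono hsub).trans_lt ?_
  exact (meas_ge_le_lintegral_div (measurable_expRoot g).aemeasurable hε
    ENNReal.ofReal_ne_top).trans_lt (ENNReal.div_lt_top hfin.ne hε)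

theorem lowerSemicontinuous_lintegral_of_continuous {X α : Type*} [TopologicalSpace X]
    [FirstCountableTopology X] [MeasurableSpace α] {μ : Measure α} {H : X → α → ENNReal}
    (hm : ∀ z, Measurable (H z)) (hc : ∀ x, Continuous fun z => H z x) :
    LowerSemicontinuous fun z => ∫⁻ x, H z x ∂μ := by
  intro z
  refine lowerSemicontinuousAt_iff_le_liminf.2 ?_
  calc ∫⁻ x, H z x ∂μ = ∫⁻ x, liminf (fun w => H w x) (𝓝 z) ∂μ :=
        lintegral_congr fun x => ((hc x).tendsto z).liminf_eq.symm
    _ ≤ _ := lintegral_liminf_le hm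

/-- For every rate `c` some nonnegative homogeneous polynomial has `d`-th root at most `c * ‖x‖` and
integrable `exp (-g ^ (1 / d))`. -/
theorem exists_homogeneous_le_mul_exp (hn : 1 ≤ n) (hd0 : d ≠ 0) (hd : Even d)
    {c : ℝ} (hc : 0 < c) :
    ∃ g : MvPolynomial (Fin n) ℝ, g.IsHomogeneous d ∧ (∀ x, 0 ≤ MvPolynomial.eval x g) ∧
      (∀ x, MvPolynomial.eval x g ^ ((1 : ℝ) / d) ≤ c * ‖x‖) ∧ ∫⁻ x, expRoot d g x < ⊤ := by
  have hn0 : (0 : ℝ) < n := by exact_mod_cast hn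
  set κ : ℝ := c ^ d / n
  have hκ : 0 < κ := by positivity
  set g : MvPolynomial (Fin n) ℝ := MvPolynomial.C κ * ∑ i, MvPolynomial.X i ^ d
  have heval : ∀ x, MvPolynomial.eval x g = κ * ∑ i, x i ^ d := by
    intro x; simp [g]
  have hterm : ∀ (x : Fin n → ℝ) i, 0 ≤ x i ^ d := fun x i => hd.pow_nonneg _
  have hnonneg : ∀ x, 0 ≤ MvPolynomial.eval x g := fun x => by
    rw [heval]; exact mul_nonneg hκ.le (Finset.sum_nonneg fun i _ => hterm x i)
  have hroot : ∀ s : ℝ, 0 ≤ s → (s ^ d) ^ ((1 : ℝ) / d) = s := fun s hs => by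
    rw [one_div, Real.pow_rpow_inv_natCast hs hd0]
  refine ⟨g, ?_, hnonneg, fun x => ?_, ?_⟩
  · have h : (∑ i : Fin n, (MvPolynomial.X i : MvPolynomial (Fin n) ℝ) ^ d).IsHomogeneous d :=
      MvPolynomial.IsHomogeneous.sum _ _ _ fun i _ => MvPolynomial.isHomogeneous_X_pow i d
    exact h.C_mul κ
  · rw [← hroot (c * ‖x‖) (by positivity)]
    refine Real.rpow_le_rpow (hnonneg x) ?_ (by positivity)
    have h : ∑ i, x i ^ d ≤ ∑ _i : Fin n, ‖x‖ ^ d := Finset.sum_le_sum fun i _ => by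
      rw [← hd.pow_abs]
      exact pow_le_pow_left₀ (abs_nonneg _) (norm_le_pi_norm x i) d
    rw [Finset.sum_const, Finset.card_univ, Fintype.card_fin, nsmul_eq_mul] at h
    calc MvPolynomial.eval x g = κ * ∑ i, x i ^ d := heval x
      _ ≤ κ * (n * ‖x‖ ^ d) := mul_le_mul_of_nonneg_left h hκ.le
      _ = (c * ‖x‖) ^ d := by rw [mul_pow]; simp only [κ]; field_simp
  · refine lt_of_le_of_lt (lintegral_mono fun x => ENNReal.ofReal_le_ofReal
      (Real.exp_le_exp.2 (neg_le_neg ?_)))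
      (lintegral_exp_neg_mul_norm_lt_top (E := Fin n → ℝ) volume
        (c := κ ^ ((1 : ℝ) / d)) (by positivity))
    have : Nonempty (Fin n) := ⟨⟨0, hn⟩⟩
    obtain ⟨i, -, hi⟩ := Finset.exists_mem_eq_sup' (Finset.univ_nonempty (α := Fin n))
      (fun i => ‖x i‖)
    have hi' : ‖x‖ ≤ ‖x i‖ := by
      rw [← hi, pi_norm_le_iff_of_nonempty]
      exact fun j => Finset.le_sup' (fun i => ‖x i‖) (Finset.mem_univ j)
    calc κ ^ ((1 : ℝ) / d) * ‖x‖ = (κ * ‖x‖ ^ d) ^ ((1 : ℝ) / d) := by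
          rw [Real.mul_rpow hκ.le (by positivity), hroot _ (norm_nonneg x)]
      _ ≤ _ := by
        refine Real.rpow_le_rpow (by positivity) ?_ (by positivity)
        rw [heval]
        refine mul_le_mul_of_nonneg_left ?_ hκ.le
        calc ‖x‖ ^ d ≤ ‖x i‖ ^ d := pow_le_pow_left₀ (norm_nonneg x) hi' d
          _ = x i ^ d := by rw [Real.norm_eq_abs, hd.pow_abs]
          _ ≤ _ := Finset.single_le_sum (fun j _ => hterm x j) (Finset.mem_univ i)

/-- The pairs `(t, a)` such that `t * exp (-(P a) ^ (1 / d))` dominates `f`. -/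
def feasibleSet (d : ℕ) {m : ℕ} (P : (Fin m → ℝ) →ₗ[ℝ] MvPolynomial (Fin n) ℝ)
    (f : (Fin n → ℝ) → ℝ) : Set (ℝ × (Fin m → ℝ)) :=
  {z | 1 ≤ z.1 ∧ (∀ x, 0 ≤ MvPolynomial.eval x (P z.2)) ∧
    ∀ x, f x ≤ z.1 * Real.exp (-(MvPolynomial.eval x (P z.2) ^ ((1 : ℝ) / d)))}

/-- The objective `t * ∫ exp (-(P a) ^ (1 / d))`. -/
def objective (d : ℕ) {m : ℕ} (P : (Fin m → ℝ) →ₗ[ℝ] MvPolynomial (Fin n) ℝ)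
    (z : ℝ × (Fin m → ℝ)) : ENNReal :=
  ENNReal.ofReal z.1 * ∫⁻ x, expRoot d (P z.2) x

variable {m : ℕ} (P : (Fin m → ℝ) →ₗ[ℝ] MvPolynomial (Fin n) ℝ)

theorem continuous_eval_rpow (x : Fin n → ℝ) :
    Continuous fun z : ℝ × (Fin m → ℝ) =>
      Real.exp (-(MvPolynomial.eval x (P z.2) ^ ((1 : ℝ) / d))) :=
  Real.continuous_exp.comp ((((continuous_eval_apply P x).comp continuous_snd).rpow_const
    fun _ => Or.inr (by positivity)).neg)

theorem isClosed_feasibleSet (f : (Fin n → ℝ) → ℝ) : IsClosed (feasibleSet d P f) := by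
  have h : feasibleSet d P f = {z | 1 ≤ z.1} ∩ ((⋂ x, {z | 0 ≤ MvPolynomial.eval x (P z.2)}) ∩
      ⋂ x, {z | f x ≤
        z.1 * Real.exp (-(MvPolynomial.eval x (P z.2) ^ ((1 : ℝ) / d)))}) := by
    ext z
    simp [feasibleSet]
  rw [h]
  refine (isClosed_le continuous_const continuous_fst).inter (IsClosed.inter ?_ ?_)
  · exact isClosed_iInter fun x => isClosed_le continuous_const
      ((continuous_eval_apply P x).comp continuous_snd)
  · exact isClosed_iInter fun x => isClosed_le continuous_const
      (continuous_fst.mul (continuous_eval_rpow P x))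

theorem lowerSemicontinuous_objective : LowerSemicontinuous (objective d P) := by
  have h : objective d P = fun z => ∫⁻ x, ENNReal.ofReal
      (z.1 * Real.exp (-(MvPolynomial.eval x (P z.2) ^ ((1 : ℝ) / d)))) := by
    funext z
    rw [objective, ← lintegral_const_mul _ (measurable_expRoot _)]
    exact lintegral_congr fun x => (ENNReal.ofReal_mul' (Real.exp_pos _).le).symm
  rw [h]
  refine lowerSemicontinuous_lintegral_of_continuous (fun z => ?_) fun x => ?_
  · have := (MvPolynomial.continuous_eval (P z.2)).measurable
    fun_prop
  · exact ENNReal.continuous_ofReal.comp (continuous_fst.mul (continuous_eval_rpow P x))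

/-- Sublevel sets of the objective on the feasible set are bounded. -/
theorem exists_bound_of_objective_le (hd0 : d ≠ 0) (hP : Function.Injective P)
    (hhom : ∀ a, (P a).IsHomogeneous d) {f : (Fin n → ℝ) → ℝ} {δ : ℝ} (hδ : 0 < δ)
    {y : Fin n → ℝ} {r : ℝ} (hr : 0 < r) (hf : ∀ x ∈ closedBall y r, δ ≤ f x)
    {J : ENNReal} (hJ : J ≠ ⊤) :
    ∃ R : ℝ, ∀ z ∈ feasibleSet d P f, objective d P z ≤ J → z ∈ closedBall 0 R := by
  wlog hδ1 : δ ≤ Real.exp (-1) generalizing δ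
  · exact this (δ := Real.exp (-1)) (Real.exp_pos _)
      (fun x hx => (not_le.1 hδ1).le.trans (hf x hx)) le_rfl
  obtain ⟨B, hB0, hB⟩ := exists_abs_eval_le P 0 1
  obtain ⟨K, hK0, hK⟩ := exists_norm_le_of_abs_eval_le P hP y hr
  set Q : ℝ := (B * K) ^ ((1 : ℝ) / d)
  set C : ℝ := J.toReal * Real.exp Q / 2 ^ n
  have hC : 0 ≤ C := by positivity
  set L : ℝ := C * (n + 1).factorial / δ
  refine ⟨max (δ * Real.exp L) (K * L ^ d), ?_⟩
  rintro ⟨t, a⟩ ⟨ht, hnonneg, hle⟩ hobj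
  simp only at ht hnonneg hle
  have ht0 : 0 < t := by linarith
  set l : ℝ := Real.log (t / δ)
  have hl1 : 1 ≤ l := by
    rw [Real.le_log_iff_exp_le (by positivity), le_div_iff₀ hδ]
    calc Real.exp 1 * δ ≤ Real.exp 1 * Real.exp (-1) := by gcongr
      _ = 1 := by rw [← Real.exp_add]; simp
      _ ≤ t := ht
  have hl0 : 0 < l := by linarith
  have htl : t = δ * Real.exp l := by
    rw [Real.exp_log (by positivity)]; field_simp
  have hroot : ∀ s : ℝ, 0 ≤ s → (s ^ ((1 : ℝ) / d)) ^ d = s := fun s hs => by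
    rw [one_div, Real.rpow_inv_natCast_pow hs hd0]
  have hball : ∀ x ∈ closedBall y r, |MvPolynomial.eval x (P a)| ≤ l ^ d := by
    intro x hx
    rw [abs_of_nonneg (hnonneg x), ← hroot _ (hnonneg x)]
    refine pow_le_pow_left₀ (Real.rpow_nonneg (hnonneg x) _) ?_ d
    have h := (hf x hx).trans (hle x)
    rw [Real.exp_neg, ← div_eq_mul_inv, le_div_iff₀ (Real.exp_pos _)] at h
    rw [Real.le_log_iff_exp_le (by positivity), le_div_iff₀ hδ]
    linarith
  have ha : ‖a‖ ≤ K * l ^ d := hK a _ (by positivity) hball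
  have hsmall : ∀ x ∈ closedBall (0 : Fin n → ℝ) l⁻¹,
      ENNReal.ofReal (Real.exp (-Q)) ≤ expRoot d (P a) x := by
    intro x hx
    refine ENNReal.ofReal_le_ofReal (Real.exp_le_exp.2 (neg_le_neg ?_))
    refine Real.rpow_le_rpow (hnonneg x) ?_ (by positivity)
    have hx' : l • x ∈ closedBall (0 : Fin n → ℝ) 1 := by
      rw [mem_closedBall_zero_iff] at hx ⊢
      rw [norm_smul, Real.norm_of_nonneg hl0.le]
      calc l * ‖x‖ ≤ l * l⁻¹ := by gcongr
        _ = 1 := mul_inv_cancel₀ hl0.ne'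
    have h := (le_abs_self _).trans (hB a _ hx')
    rw [(hhom a).eval_smul_eq] at h
    have h2 : l ^ d * MvPolynomial.eval x (P a) ≤ l ^ d * (B * K) := by
      calc _ ≤ B * ‖a‖ := h
        _ ≤ B * (K * l ^ d) := by gcongr
        _ = _ := by ring
    exact le_of_mul_le_mul_left h2 (by positivity)
  have hint : ENNReal.ofReal (Real.exp (-Q)) * ENNReal.ofReal ((2 * l⁻¹) ^ n)
      ≤ ∫⁻ x, expRoot d (P a) x := by
    calc ENNReal.ofReal (Real.exp (-Q)) * ENNReal.ofReal ((2 * l⁻¹) ^ n)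
        = ∫⁻ _x in closedBall (0 : Fin n → ℝ) l⁻¹, ENNReal.ofReal (Real.exp (-Q)) := by
          rw [setLIntegral_const, Real.volume_pi_closedBall _ (by positivity), Fintype.card_fin]
      _ ≤ ∫⁻ x in closedBall (0 : Fin n → ℝ) l⁻¹, expRoot d (P a) x :=
          setLIntegral_mono' measurableSet_closedBall hsmall
      _ ≤ _ := setLIntegral_le_lintegral _ _
  have hreal : t * (Real.exp (-Q) * (2 * l⁻¹) ^ n) ≤ J.toReal := by
    rw [← ENNReal.ofReal_le_iff_le_toReal hJ, ENNReal.ofReal_mul ht0.le,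
      ENNReal.ofReal_mul (Real.exp_pos _).le]
    exact (mul_le_mul_right hint _).trans hobj
  have htC : t ≤ C * l ^ n := by
    have h1 : t * (Real.exp (-Q) * (2 * l⁻¹) ^ n) = t * 2 ^ n / (Real.exp Q * l ^ n) := by
      rw [Real.exp_neg, mul_pow, inv_pow]; field_simp
    rw [h1, div_le_iff₀ (by positivity)] at hreal
    have h2 : C * l ^ n = J.toReal * (Real.exp Q * l ^ n) / 2 ^ n := by simp only [C]; ring
    rw [h2, le_div_iff₀ (by positivity)]
    exact hreal
  have hlL : l ≤ L := by
    have h := Real.pow_div_factorial_le_exp l hl0.le (n + 1)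
    have h1 : δ * (l ^ (n + 1) / (n + 1).factorial) ≤ C * l ^ n := by
      calc _ ≤ δ * Real.exp l := by gcongr
        _ = t := htl.symm
        _ ≤ _ := htC
    have h2 : l ^ n * (δ * l) ≤ l ^ n * (C * (n + 1).factorial) := by
      have h3 : δ * (l ^ (n + 1) / (n + 1).factorial)
          = (l ^ n * (δ * l)) / (n + 1).factorial := by ring
      rw [h3, div_le_iff₀ (by positivity)] at h1
      linarith
    have h4 := le_of_mul_le_mul_left h2 (by positivity)
    rw [le_div_iff₀ hδ]
    linarith
  rw [mem_closedBall_zero_iff, Prod.norm_def]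
  refine max_le_max ?_ (ha.trans (by gcongr))
  simp only
  rw [Real.norm_of_nonneg ht0.le, htl]
  gcongr

end Optimization

/-- Existence of a solution of Problem 1 (Theorem 1.2 of the paper): for an integrable
log-concave `f` with `‖f‖_∞ = f 0 = 1` there is a pair `(t₁, g₁)` with `t₁ ≥ 1` and `g₁` a
nonnegative `d`-homogeneous polynomial with `|G₁(g₁)| < ∞`, such that
`f ≤ t₁ exp(-g₁^{1/d})` and `t₁ ∫ exp(-g₁^{1/d})` is minimal among all such pairs. -/
theorem stmt_0 (n d : ℕ) (hn : 1 ≤ n) (hd : Even d)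
    (f : (Fin n → ℝ) → ℝ) (hf_nonneg : ∀ x, 0 ≤ f x)
    (hf_int : Integrable f) (hf_pos : 0 < ∫ x, f x)
    (hf_lc : ∀ x y : Fin n → ℝ, ∀ θ : ℝ, 0 ≤ θ → θ ≤ 1 →
      f x ^ (1 - θ) * f y ^ θ ≤ f ((1 - θ) • x + θ • y))
    (hf_le : ∀ x, f x ≤ 1) (hf0 : f 0 = 1) :
    ∃ (t₁ : ℝ) (g₁ : MvPolynomial (Fin n) ℝ),
      1 ≤ t₁ ∧ g₁.IsHomogeneous d ∧ (∀ x, 0 ≤ MvPolynomial.eval x g₁) ∧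
      volume (G1 g₁) < ⊤ ∧
      (∀ x, f x ≤ t₁ * Real.exp (-(MvPolynomial.eval x g₁ ^ ((1 : ℝ) / d)))) ∧
      ∀ (t : ℝ) (g : MvPolynomial (Fin n) ℝ), 1 ≤ t → g.IsHomogeneous d →
        (∀ x, 0 ≤ MvPolynomial.eval x g) →
        (∀ x, f x ≤ t * Real.exp (-(MvPolynomial.eval x g ^ ((1 : ℝ) / d)))) →
        ENNReal.ofReal t₁ *
            (∫⁻ x, ENNReal.ofReal (Real.exp (-(MvPolynomial.eval x g₁ ^ ((1 : ℝ) / d))))) ≤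
          ENNReal.ofReal t *
            (∫⁻ x, ENNReal.ofReal (Real.exp (-(MvPolynomial.eval x g ^ ((1 : ℝ) / d))))) := by
  rcases eq_or_ne d 0 with rfl | hd0
  · refine ⟨Real.exp 1, MvPolynomial.C 2, Real.one_le_exp zero_le_one,
      MvPolynomial.isHomogeneous_C _ _, fun x => by simp, ?_, fun x => ?_, ?_⟩
    · have : G1 (MvPolynomial.C 2 : MvPolynomial (Fin n) ℝ) = ∅ := by
        ext x; simp [G1]
      simp [this]
    · simpa [← Real.exp_add] using hf_le x
    · intro t g _ _ _ hle
      have ht : Real.exp 1 ≤ t := by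
        have h := hle 0
        rw [hf0] at h
        simp only [Nat.cast_zero, div_zero, Real.rpow_zero, Real.exp_neg] at h
        rwa [← div_eq_mul_inv, le_div_iff₀ (Real.exp_pos _), one_mul] at h
      simp only [Nat.cast_zero, div_zero, Real.rpow_zero]
      gcongr
  obtain ⟨m, P, hP, hhom, hsurj⟩ := exists_linearMap_homogeneous n d
  obtain ⟨δ, hδ, y, r, hr, hball⟩ :=
    exists_closedBall_le_of_logConcave volume hf_nonneg hf_lc hf_pos
  obtain ⟨c, hc, hdecay⟩ := exists_le_exp_neg_norm_of_logConcave volume hf_nonneg hf_int hf_lc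
    hf_pos hf_le hf0
  obtain ⟨g₀, hg₀hom, hg₀nonneg, hg₀le, hg₀fin⟩ := exists_homogeneous_le_mul_exp hn hd0 hd hc
  obtain ⟨a₀, rfl⟩ := hsurj g₀ hg₀hom
  set z₀ : ℝ × (Fin m → ℝ) := (Real.exp 1, a₀)
  have hz₀ : z₀ ∈ feasibleSet d P f :=
    ⟨Real.one_le_exp zero_le_one, hg₀nonneg, fun x => (hdecay x).trans
      (mul_le_mul_of_nonneg_left (Real.exp_le_exp.2 (neg_le_neg (hg₀le x)))
        (Real.exp_pos _).le)⟩
  have hJ : objective d P z₀ < ⊤ := ENNReal.mul_lt_top ENNReal.ofReal_lt_top hg₀fin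
  obtain ⟨R, hR⟩ := exists_bound_of_objective_le P hd0 hP hhom hδ hr hball hJ.ne
  have hcomp : IsCompact (feasibleSet d P f ∩ closedBall 0 R) :=
    (isCompact_closedBall 0 R).inter_left (isClosed_feasibleSet P f)
  have hne : (feasibleSet d P f ∩ closedBall 0 R).Nonempty := ⟨z₀, hz₀, hR z₀ hz₀ le_rfl⟩
  obtain ⟨⟨t₁, a₁⟩, ⟨hz₁, -⟩, hmin⟩ := LowerSemicontinuousOn.exists_isMinOn hne hcomp
    ((lowerSemicontinuous_objective (d := d) P).lowerSemicontinuousOn _)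
  rw [isMinOn_iff] at hmin
  have hle₀ : objective d P (t₁, a₁) ≤ objective d P z₀ := hmin z₀ ⟨hz₀, hR z₀ hz₀ le_rfl⟩
  obtain ⟨ht₁, hnonneg₁, hdom₁⟩ := hz₁
  have hfin₁ : ∫⁻ x, expRoot d (P a₁) x < ⊤ := by
    refine lt_of_le_of_lt ?_ (hle₀.trans_lt hJ)
    exact le_mul_of_one_le_left zero_le (by simpa using ht₁)
  refine ⟨t₁, P a₁, ht₁, hhom a₁, hnonneg₁, volume_G1_lt_top hnonneg₁ hfin₁, hdom₁, ?_⟩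
  intro t g ht hg hgnonneg hgle
  obtain ⟨a, rfl⟩ := hsurj g hg
  have hz : (t, a) ∈ feasibleSet d P f := ⟨ht, hgnonneg, hgle⟩
  change objective d P (t₁, a₁) ≤ objective d P (t, a)
  rcases le_total (objective d P (t, a)) (objective d P z₀) with h | h
  · exact hmin _ ⟨hz, hR _ hz h⟩
  · exact hle₀.trans h
end
end

section
/- Let f : ℝⁿ → [0,+∞) be an integrable log-concave function with ‖f‖_∞ = f(0) = 1 and 0 < ∫_{ℝⁿ} f(x) dx, and let d ∈ ℕ be even. For t > 1, let v(t) = inf{ |G₁(g)| : g a homogeneous polynomial of degree d on ℝⁿ with H_t(f) ⊆ G₁(g) }. Then: (a) v is non-increasing on (1,+∞); (b) t ↦ (log t)ⁿ·v(t) is non-decreasing on (1,+∞); (c) for all t₀, t₁ > 1 and θ ∈ [0,1], v(t_θ) ≤ v(t₀)^{1−θ}·v(t₁)^{θ}, where t_θ is defined by (log t_θ)^d = (1−θ)(log t₀)^d + θ(log t₁)^d. -/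
open MeasureTheory Pointwise ENNReal

noncomputable section

/-- `H_t(f) = ⋃_{λ∈(0,1)} (log(t/λ))⁻¹·K_λ(f)` where `K_λ(f) = {x : f x ≥ λ}`. -/
def Hset {n : ℕ} (f : (Fin n → ℝ) → ℝ) (t : ℝ) : Set (Fin n → ℝ) :=
  ⋃ l ∈ Set.Ioo (0 : ℝ) 1, (Real.log (t / l))⁻¹ • {x : Fin n → ℝ | l ≤ f x}

/-- `v(t)`: the infimum of `|G₁(g)|` over `d`-homogeneous polynomials `g` with
`H_t(f) ⊆ G₁(g)`. -/
def vfun (n d : ℕ) (f : (Fin n → ℝ) → ℝ) (t : ℝ) : ℝ≥0∞ :=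
  ⨅ (g : MvPolynomial (Fin n) ℝ) (_ : g.IsHomogeneous d) (_ : Hset f t ⊆ G1 g),
    volume (G1 g)

/-! ### Homogeneous polynomials and their sublevel sets -/

theorem mem_G1_iff {n : ℕ} {g : MvPolynomial (Fin n) ℝ} {x : Fin n → ℝ} :
    x ∈ G1 g ↔ MvPolynomial.eval x g ≤ 1 := Iff.rfl

theorem MvPolynomial.IsHomogeneous.eval_smul {n d : ℕ} {g : MvPolynomial (Fin n) ℝ}
    (hg : g.IsHomogeneous d) (c : ℝ) (x : Fin n → ℝ) :
    MvPolynomial.eval (c • x) g = c ^ d * MvPolynomial.eval x g := by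
  rw [MvPolynomial.eval_eq, MvPolynomial.eval_eq, Finset.mul_sum]
  refine Finset.sum_congr rfl fun m hm => ?_
  have hdeg : m.degree = d := by
    by_contra h
    exact MvPolynomial.mem_support_iff.mp hm (hg.coeff_eq_zero h)
  simp only [Pi.smul_apply, smul_eq_mul, mul_pow, Finset.prod_mul_distrib]
  rw [Finset.prod_pow_eq_pow_sum, ← Finsupp.degree_apply, hdeg]
  ring

theorem MvPolynomial.IsHomogeneous.setOf_eval_le_pow {n d : ℕ} {g : MvPolynomial (Fin n) ℝ}
    (hg : g.IsHomogeneous d) {r : ℝ} (hr : 0 < r) :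
    {x | MvPolynomial.eval x g ≤ r ^ d} = r • G1 g := by
  ext x
  rw [Set.mem_smul_set_iff_inv_smul_mem₀ hr.ne', mem_G1_iff, Set.mem_ofPred_eq,
    hg.eval_smul, inv_pow, inv_mul_le_iff₀ (pow_pos hr d), mul_one]

theorem volume_smul_fin {n : ℕ} {r : ℝ} (hr : 0 < r) (s : Set (Fin n → ℝ)) :
    volume (r • s) = ENNReal.ofReal (r ^ n) * volume s := by
  rw [Measure.addHaar_smul, abs_of_pos (by positivity), Module.finrank_fin_fun]

theorem MvPolynomial.IsHomogeneous.volume_setOf_eval_le {n d : ℕ} (hd : d ≠ 0)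
    {g : MvPolynomial (Fin n) ℝ} (hg : g.IsHomogeneous d) {s : ℝ} (hs : 0 < s) :
    volume {x | MvPolynomial.eval x g ≤ s} =
      ENNReal.ofReal (s ^ ((n : ℝ) / d)) * volume (G1 g) := by
  have hr : 0 < s ^ (1 / (d : ℝ)) := by positivity
  have hpow : (s ^ (1 / (d : ℝ))) ^ d = s := by
    rw [one_div, Real.rpow_inv_natCast_pow hs.le hd]
  have hpow' : (s ^ (1 / (d : ℝ))) ^ n = s ^ ((n : ℝ) / d) := by
    rw [← Real.rpow_natCast, ← Real.rpow_mul hs.le]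
    ring_nf
  rw [← hpow', ← volume_smul_fin hr, ← hg.setOf_eval_le_pow hr, hpow]

theorem volume_G1_ne_zero {n d : ℕ} (hd : d ≠ 0) {g : MvPolynomial (Fin n) ℝ}
    (hg : g.IsHomogeneous d) : volume (G1 g) ≠ 0 := by
  have hopen : IsOpen {x : Fin n → ℝ | MvPolynomial.eval x g < 1} :=
    isOpen_lt (MvPolynomial.continuous_eval g) continuous_const
  have hzero : MvPolynomial.eval (0 : Fin n → ℝ) g = 0 := by
    simpa [hd] using hg.eval_smul 0 0
  have hpos := hopen.measure_pos volume ⟨0, hzero.trans_lt one_pos⟩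
  exact (hpos.trans_le (measure_mono fun x (hx : MvPolynomial.eval x g < 1) => hx.le)).ne'

theorem volume_G1_eq_top {n d : ℕ} (hd : d ≠ 0) {g : MvPolynomial (Fin n) ℝ}
    (hg : g.IsHomogeneous d) {x₀ : Fin n → ℝ} (hx₀ : MvPolynomial.eval x₀ g < 0) :
    volume (G1 g) = ⊤ := by
  have hn : n ≠ 0 := by
    rintro rfl
    have h := hg.eval_smul 2 x₀
    rw [Subsingleton.elim ((2 : ℝ) • x₀) x₀] at h
    have : (1 : ℝ) < 2 ^ d := one_lt_pow₀ (by norm_num) hd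
    nlinarith
  set N : Set (Fin n → ℝ) := {x | MvPolynomial.eval x g < 0} with hN
  have hopen : IsOpen N := isOpen_lt (MvPolynomial.continuous_eval g) continuous_const
  have hpos : volume N ≠ 0 := (hopen.measure_pos volume ⟨x₀, hx₀⟩).ne'
  have hscale : (2 : ℝ) • N = N := by
    ext x
    rw [Set.mem_smul_set_iff_inv_smul_mem₀ two_ne_zero, hN, Set.mem_ofPred_eq, Set.mem_ofPred_eq,
      hg.eval_smul]
    exact ⟨fun h => by by_contra! h'; exact absurd h (not_lt.mpr (by positivity)),
      fun h => mul_neg_of_pos_of_neg (by positivity) h⟩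
  have htop : volume N = ⊤ := by
    by_contra hfin
    have h := volume_smul_fin two_pos N
    rw [hscale] at h
    have h1 : ENNReal.ofReal (2 ^ n) = 1 :=
      (ENNReal.mul_left_inj hpos hfin).mp (by rw [← h, one_mul])
    rw [ENNReal.ofReal_eq_one] at h1
    exact absurd h1 (one_lt_pow₀ (by norm_num) hn).ne'
  refine top_unique (htop ▸ measure_mono fun x (hx : MvPolynomial.eval x g < 0) => ?_)
  exact hx.le.trans zero_le_one

/-! ### Laplace transform of a homogeneous polynomial -/

theorem lintegral_exp_neg_Ioi (a : ℝ) :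
    ∫⁻ s in Set.Ioi a, ENNReal.ofReal (Real.exp (-s)) = ENNReal.ofReal (Real.exp (-a)) := by
  rw [← ofReal_integral_eq_lintegral_ofReal (integrableOn_exp_neg_Ioi a)
    (Filter.Eventually.of_forall fun _ => (Real.exp_pos _).le), integral_exp_neg_Ioi]

theorem lintegral_indicator_Ici_exp_neg_le (a : ℝ) :
    ∫⁻ s in Set.Ioi (0 : ℝ), (Set.Ici a).indicator (fun s => ENNReal.ofReal (Real.exp (-s))) s ≤
      ENNReal.ofReal (Real.exp (-a)) := by
  refine (setLIntegral_le_lintegral _ _).trans_eq ?_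
  rw [lintegral_indicator measurableSet_Ici, ← lintegral_exp_neg_Ioi,
    setLIntegral_congr Ioi_ae_eq_Ici]

theorem lintegral_indicator_Ici_exp_neg {a : ℝ} (ha : 0 ≤ a) :
    ∫⁻ s in Set.Ioi (0 : ℝ), (Set.Ici a).indicator (fun s => ENNReal.ofReal (Real.exp (-s))) s =
      ENNReal.ofReal (Real.exp (-a)) := by
  refine (lintegral_indicator_Ici_exp_neg_le a).antisymm ?_
  rw [← lintegral_exp_neg_Ioi, lintegral_indicator measurableSet_Ici,
    Measure.restrict_restrict measurableSet_Ici]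
  exact lintegral_mono_set fun s (hs : a < s) => ⟨hs.le, ha.trans_lt hs⟩

/-- The constant `Γ(1 + n/d)`, written as an integral. -/
def gammaConst (n d : ℕ) : ℝ≥0∞ :=
  ∫⁻ s in Set.Ioi (0 : ℝ), ENNReal.ofReal (Real.exp (-s)) * ENNReal.ofReal (s ^ ((n : ℝ) / d))

theorem gammaConst_ne_top (n d : ℕ) : gammaConst n d ≠ ⊤ := by
  have h := Real.GammaIntegral_convergent (s := (n : ℝ) / d + 1) (by positivity)
  rw [add_sub_cancel_right] at h
  have h' := h.lintegral_lt_top.ne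
  simpa only [gammaConst, ENNReal.ofReal_mul (Real.exp_pos _).le] using h'

theorem gammaConst_ne_zero (n d : ℕ) : gammaConst n d ≠ 0 := by
  rw [gammaConst, ← pos_iff_ne_zero, setLIntegral_pos_iff (by fun_prop)]
  refine lt_of_lt_of_le ?_ (measure_mono (s := Set.Ioi (0 : ℝ)) fun s hs => ⟨?_, hs⟩)
  · simp
  · have hs' : (0 : ℝ) < s := hs
    rw [Function.mem_support]
    exact mul_ne_zero (ENNReal.ofReal_pos.mpr (Real.exp_pos _)).ne'
      (ENNReal.ofReal_pos.mpr (by positivity)).ne'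

theorem lintegral_layer_eq {n d : ℕ} (hd : d ≠ 0) {g : MvPolynomial (Fin n) ℝ}
    (hg : g.IsHomogeneous d) :
    ∫⁻ x : Fin n → ℝ, ∫⁻ s in Set.Ioi (0 : ℝ),
      (Set.Ici (MvPolynomial.eval x g)).indicator (fun s => ENNReal.ofReal (Real.exp (-s))) s =
      gammaConst n d * volume (G1 g) := by
  have hcont := MvPolynomial.continuous_eval g
  rw [lintegral_lintegral_swap, gammaConst, ← lintegral_mul_const _ (by fun_prop)]
  · refine setLIntegral_congr_fun measurableSet_Ioi fun s hs => ?_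
    rw [mul_assoc, ← hg.volume_setOf_eval_le hd hs,
      ← lintegral_indicator_const (measurableSet_le hcont.measurable measurable_const)]
    rfl
  · have hset : MeasurableSet {p : (Fin n → ℝ) × ℝ | MvPolynomial.eval p.1 g ≤ p.2} :=
      measurableSet_le (hcont.measurable.comp measurable_fst) measurable_snd
    have hmeas : Measurable fun p : (Fin n → ℝ) × ℝ => ENNReal.ofReal (Real.exp (-p.2)) := by
      fun_prop
    exact (hmeas.indicator hset).aemeasurable

theorem gammaConst_mul_volume_G1_le {n d : ℕ} (hd : d ≠ 0) {g : MvPolynomial (Fin n) ℝ}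
    (hg : g.IsHomogeneous d) :
    gammaConst n d * volume (G1 g) ≤
      ∫⁻ x, ENNReal.ofReal (Real.exp (-MvPolynomial.eval x g)) := by
  rw [← lintegral_layer_eq hd hg]
  exact lintegral_mono fun x => lintegral_indicator_Ici_exp_neg_le _

theorem gammaConst_mul_volume_G1 {n d : ℕ} (hd : d ≠ 0) {g : MvPolynomial (Fin n) ℝ}
    (hg : g.IsHomogeneous d) (hpos : ∀ x, 0 ≤ MvPolynomial.eval x g) :
    gammaConst n d * volume (G1 g) =
      ∫⁻ x, ENNReal.ofReal (Real.exp (-MvPolynomial.eval x g)) := by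
  rw [← lintegral_layer_eq hd hg]
  exact lintegral_congr fun x => lintegral_indicator_Ici_exp_neg (hpos x)

/-- `g ↦ |G₁(g)|` is log-convex on homogeneous polynomials of a fixed positive degree. -/
theorem volume_G1_combination_le {n d : ℕ} (hd : d ≠ 0) {g₀ g₁ : MvPolynomial (Fin n) ℝ}
    (h₀ : g₀.IsHomogeneous d) (h₁ : g₁.IsHomogeneous d) {θ : ℝ} (hθ₀ : 0 < θ) (hθ₁ : θ < 1) :
    volume (G1 (MvPolynomial.C (1 - θ) * g₀ + MvPolynomial.C θ * g₁)) ≤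
      volume (G1 g₀) ^ (1 - θ) * volume (G1 g₁) ^ θ := by
  have hθ' : 0 < 1 - θ := sub_pos.mpr hθ₁
  by_cases hp₀ : ∀ x, 0 ≤ MvPolynomial.eval x g₀
  swap
  · push Not at hp₀
    obtain ⟨x, hx⟩ := hp₀
    rw [volume_G1_eq_top hd h₀ hx, ENNReal.top_rpow_of_pos hθ', ENNReal.top_mul]
    · exact le_top
    · exact (ENNReal.rpow_eq_zero_iff_of_pos hθ₀).not.mpr (volume_G1_ne_zero hd h₁)
  by_cases hp₁ : ∀ x, 0 ≤ MvPolynomial.eval x g₁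
  swap
  · push Not at hp₁
    obtain ⟨x, hx⟩ := hp₁
    rw [volume_G1_eq_top hd h₁ hx, ENNReal.top_rpow_of_pos hθ₀, ENNReal.mul_top]
    · exact le_top
    · exact (ENNReal.rpow_eq_zero_iff_of_pos hθ').not.mpr (volume_G1_ne_zero hd h₀)
  have hc₀ := MvPolynomial.continuous_eval g₀
  have hc₁ := MvPolynomial.continuous_eval g₁
  rw [← ENNReal.mul_le_mul_iff_right (gammaConst_ne_zero n d) (gammaConst_ne_top n d)]
  calc gammaConst n d * volume (G1 (MvPolynomial.C (1 - θ) * g₀ + MvPolynomial.C θ * g₁))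
      ≤ ∫⁻ x, ENNReal.ofReal (Real.exp (-MvPolynomial.eval x
          (MvPolynomial.C (1 - θ) * g₀ + MvPolynomial.C θ * g₁))) :=
        gammaConst_mul_volume_G1_le hd ((h₀.C_mul _).add (h₁.C_mul _))
    _ = ∫⁻ x, ENNReal.ofReal (Real.exp (-MvPolynomial.eval x g₀)) ^ (1 - θ) *
          ENNReal.ofReal (Real.exp (-MvPolynomial.eval x g₁)) ^ θ := by
        refine lintegral_congr fun x => ?_
        rw [ENNReal.ofReal_rpow_of_pos (Real.exp_pos _), ENNReal.ofReal_rpow_of_pos (Real.exp_pos _),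
          ← ENNReal.ofReal_mul (by positivity), ← Real.exp_mul, ← Real.exp_mul, ← Real.exp_add]
        simp only [map_add, map_mul, MvPolynomial.eval_C]
        ring_nf
    _ ≤ (gammaConst n d * volume (G1 g₀)) ^ (1 - θ) * (gammaConst n d * volume (G1 g₁)) ^ θ := by
        rw [gammaConst_mul_volume_G1 hd h₀ hp₀, gammaConst_mul_volume_G1 hd h₁ hp₁]
        exact ENNReal.lintegral_mul_norm_pow_le
          (hc₀.neg.rexp.measurable.ennreal_ofReal.aemeasurable)
          (hc₁.neg.rexp.measurable.ennreal_ofReal.aemeasurable) hθ'.le hθ₀.le (by ring)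
    _ = gammaConst n d * (volume (G1 g₀) ^ (1 - θ) * volume (G1 g₁) ^ θ) := by
        rw [ENNReal.mul_rpow_of_nonneg _ _ hθ'.le, ENNReal.mul_rpow_of_nonneg _ _ hθ₀.le,
          mul_mul_mul_comm, ← ENNReal.rpow_add_of_nonneg _ _ hθ'.le hθ₀.le, sub_add_cancel,
          ENNReal.rpow_one]

/-! ### The sets `H_t(f)` -/

theorem mem_Hset_iff {n : ℕ} {f : (Fin n → ℝ) → ℝ} {t : ℝ} (ht : 1 ≤ t) {x : Fin n → ℝ} :
    x ∈ Hset f t ↔ ∃ u : ℝ, 0 < u ∧ Real.exp (-u) ≤ f ((Real.log t + u) • x) := by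
  have hlog : 0 ≤ Real.log t := Real.log_nonneg ht
  have key : ∀ u : ℝ, 0 < u → (x ∈ (Real.log t + u)⁻¹ • {y : Fin n → ℝ | Real.exp (-u) ≤ f y} ↔
      Real.exp (-u) ≤ f ((Real.log t + u) • x)) := fun u hu => by
    rw [Set.mem_smul_set_iff_inv_smul_mem₀ (by positivity), inv_inv, Set.mem_ofPred_eq]
  have hdiv : ∀ u : ℝ, Real.log (t / Real.exp (-u)) = Real.log t + u := fun u => by
    rw [Real.log_div (by positivity) (Real.exp_pos _).ne', Real.log_exp, sub_neg_eq_add]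
  simp only [Hset, Set.mem_iUnion]
  constructor
  · rintro ⟨l, ⟨hl₀, hl₁⟩, hx⟩
    have hu : 0 < -Real.log l := neg_pos.mpr (Real.log_neg hl₀ hl₁)
    have hl : l = Real.exp (-(-Real.log l)) := by rw [neg_neg, Real.exp_log hl₀]
    refine ⟨_, hu, (key _ hu).mp ?_⟩
    rwa [← hdiv, ← hl]
  · rintro ⟨u, hu, hx⟩
    refine ⟨Real.exp (-u), ⟨Real.exp_pos _, by simpa using hu⟩, ?_⟩
    rw [hdiv]
    exact (key u hu).mpr hx

theorem zero_mem_Hset {n : ℕ} {f : (Fin n → ℝ) → ℝ} (hf0 : f 0 = 1) {t : ℝ} (ht : 1 ≤ t) :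
    0 ∈ Hset f t :=
  (mem_Hset_iff ht).mpr ⟨1, one_pos, by rw [smul_zero, hf0, Real.exp_le_one_iff]; norm_num⟩

/-- Superlevel sets of a log-concave function with maximum `f 0 = 1` are star-shaped at `0`. -/
theorem le_smul_of_logConcave {n : ℕ} {f : (Fin n → ℝ) → ℝ} (hf_nonneg : ∀ x, 0 ≤ f x)
    (hf_lc : ∀ x y : Fin n → ℝ, ∀ θ : ℝ, 0 ≤ θ → θ ≤ 1 →
      f x ^ (1 - θ) * f y ^ θ ≤ f ((1 - θ) • x + θ • y))
    (hf_le : ∀ x, f x ≤ 1) (hf0 : f 0 = 1) {c : ℝ} (hc₀ : 0 ≤ c) (hc₁ : c ≤ 1)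
    (x : Fin n → ℝ) : f x ≤ f (c • x) := by
  have h := hf_lc 0 x c hc₀ hc₁
  rw [hf0, Real.one_rpow, one_mul, smul_zero, zero_add] at h
  exact (Real.self_le_rpow_of_le_one (hf_nonneg x) (hf_le x) hc₁).trans h

theorem Hset_antitone {n : ℕ} {f : (Fin n → ℝ) → ℝ}
    (hstar : ∀ c : ℝ, 0 ≤ c → c ≤ 1 → ∀ x, f x ≤ f (c • x))
    {t₀ t₁ : ℝ} (h₀ : 1 < t₀) (h : t₀ ≤ t₁) : Hset f t₁ ⊆ Hset f t₀ := by
  intro x hx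
  obtain ⟨u, hu, hx⟩ := (mem_Hset_iff (h₀.le.trans h)).mp hx
  have hlog₀ := Real.log_pos h₀
  have hlog : Real.log t₀ ≤ Real.log t₁ := Real.log_le_log (by linarith) h
  have hpos : 0 < Real.log t₁ + u := by linarith
  refine (mem_Hset_iff h₀.le).mpr ⟨u, hu, hx.trans ?_⟩
  have hle := hstar ((Real.log t₀ + u) / (Real.log t₁ + u)) (by positivity)
    (div_le_one_of_le₀ (by linarith) hpos.le) ((Real.log t₁ + u) • x)
  rwa [smul_smul, div_mul_cancel₀ _ hpos.ne'] at hle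

theorem smul_mem_Hset {n : ℕ} {f : (Fin n → ℝ) → ℝ}
    (hstar : ∀ c : ℝ, 0 ≤ c → c ≤ 1 → ∀ x, f x ≤ f (c • x))
    {t₀ t₁ : ℝ} (h₀ : 1 < t₀) (h : t₀ ≤ t₁) {x : Fin n → ℝ} (hx : x ∈ Hset f t₀) :
    (Real.log t₀ / Real.log t₁) • x ∈ Hset f t₁ := by
  obtain ⟨u, hu, hx⟩ := (mem_Hset_iff h₀.le).mp hx
  have hlog₀ := Real.log_pos h₀
  have hlog : Real.log t₀ ≤ Real.log t₁ := Real.log_le_log (by linarith) h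
  have hlog₁ : 0 < Real.log t₁ := by linarith
  have hpos : 0 < Real.log t₀ + u := by linarith
  refine (mem_Hset_iff (h₀.le.trans h)).mpr ⟨u, hu, hx.trans ?_⟩
  have hcu : (Real.log t₁ + u) * (Real.log t₀ / Real.log t₁) ≤ Real.log t₀ + u := by
    rw [mul_div_assoc', div_le_iff₀ hlog₁]
    nlinarith
  have hle := hstar ((Real.log t₁ + u) * (Real.log t₀ / Real.log t₁) / (Real.log t₀ + u))
    (by positivity) (div_le_one_of_le₀ hcu hpos.le) ((Real.log t₀ + u) • x)
  rwa [smul_smul, div_mul_cancel₀ _ hpos.ne', mul_smul] at hle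

/-- A weighted Minkowski inequality, for the shift of two positive numbers by `u`. -/
theorem add_pow_combination_le {d : ℕ} (hd : d ≠ 0) {a b c u θ : ℝ} (ha : 0 < a) (hb : 0 < b)
    (hc : 0 ≤ c) (hu : 0 ≤ u) (hθ₀ : 0 ≤ θ) (hθ₁ : θ ≤ 1)
    (h : c ^ d = (1 - θ) * a ^ d + θ * b ^ d) :
    (1 - θ) * (a + u) ^ d + θ * (b + u) ^ d ≤ (c + u) ^ d := by
  have hθ' : 0 ≤ 1 - θ := sub_nonneg.mpr hθ₁
  have hc' : 0 < c := by
    refine hc.lt_of_ne' ?_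
    rintro rfl
    rw [zero_pow hd] at h
    rcases hθ₀.eq_or_lt with rfl | hθ
    · have : 0 < a ^ d := by positivity
      linarith
    · have : 0 < θ * b ^ d := by positivity
      have : 0 ≤ (1 - θ) * a ^ d := by positivity
      linarith
  have hcu : 0 < c + u := by linarith
  have hw : c / (c + u) + u / (c + u) = 1 := by rw [← add_div, div_self hcu.ne']
  have key : ∀ z : ℝ, 0 < z →
      (z + u) ^ d ≤ (c + u) ^ d * (c / (c + u) * (z ^ d / c ^ d) + u / (c + u)) := fun z hz => by
    have hconv := (convexOn_pow d).2 (x := z / c) (Set.mem_Ici.mpr (by positivity)) (y := 1)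
      (Set.mem_Ici.mpr zero_le_one) (by positivity) (by positivity) hw
    simp only [smul_eq_mul, one_pow, mul_one, div_pow] at hconv
    have heq : c / (c + u) * (z / c) + u / (c + u) = (z + u) / (c + u) := by field_simp
    rw [heq, div_pow, div_le_iff₀ (by positivity)] at hconv
    linarith
  calc (1 - θ) * (a + u) ^ d + θ * (b + u) ^ d
      ≤ (1 - θ) * ((c + u) ^ d * (c / (c + u) * (a ^ d / c ^ d) + u / (c + u))) +
        θ * ((c + u) ^ d * (c / (c + u) * (b ^ d / c ^ d) + u / (c + u))) := by
        gcongr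
        exacts [key a ha, key b hb]
    _ = (c + u) ^ d *
        (c / (c + u) * (((1 - θ) * a ^ d + θ * b ^ d) / c ^ d) + u / (c + u)) := by ring
    _ = (c + u) ^ d := by rw [← h, div_self (by positivity), mul_one, hw, mul_one]

theorem Hset_subset_G1_combination {n d : ℕ} (hd : d ≠ 0) {f : (Fin n → ℝ) → ℝ}
    {g₀ g₁ : MvPolynomial (Fin n) ℝ} (h₀ : g₀.IsHomogeneous d) (h₁ : g₁.IsHomogeneous d)
    {t₀ t₁ t θ : ℝ} (ht₀ : 1 < t₀) (ht₁ : 1 < t₁) (ht : 1 ≤ t) (hθ₀ : 0 ≤ θ) (hθ₁ : θ ≤ 1)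
    (hlog : Real.log t ^ d = (1 - θ) * Real.log t₀ ^ d + θ * Real.log t₁ ^ d)
    (hs₀ : Hset f t₀ ⊆ G1 g₀) (hs₁ : Hset f t₁ ⊆ G1 g₁) :
    Hset f t ⊆ G1 (MvPolynomial.C (1 - θ) * g₀ + MvPolynomial.C θ * g₁) := by
  intro x hx
  obtain ⟨u, hu, hx⟩ := (mem_Hset_iff ht).mp hx
  have hL := Real.log_nonneg ht
  have hpos : 0 < Real.log t + u := by linarith
  set y := (Real.log t + u) • x with hy
  have key : ∀ {s : ℝ} {g : MvPolynomial (Fin n) ℝ}, 1 < s → g.IsHomogeneous d →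
      Hset f s ⊆ G1 g → MvPolynomial.eval y g ≤ (Real.log s + u) ^ d := by
    intro s g hs hg hsub
    have hsu : 0 < Real.log s + u := add_pos (Real.log_pos hs) hu
    have hmem : (Real.log s + u)⁻¹ • y ∈ Hset f s :=
      (mem_Hset_iff hs.le).mpr ⟨u, hu, by rwa [smul_inv_smul₀ hsu.ne']⟩
    have hle := hsub hmem
    rwa [mem_G1_iff, hg.eval_smul, inv_pow, inv_mul_le_iff₀ (pow_pos hsu d),
      mul_one] at hle
  have hg := (h₀.C_mul (1 - θ)).add (h₁.C_mul θ)
  have hxy : x = (Real.log t + u)⁻¹ • y := by rw [hy, inv_smul_smul₀ hpos.ne']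
  rw [mem_G1_iff, hxy, hg.eval_smul, inv_pow, inv_mul_le_iff₀ (pow_pos hpos d), mul_one]
  simp only [map_add, map_mul, MvPolynomial.eval_C]
  refine le_trans ?_ (add_pow_combination_le hd (Real.log_pos ht₀) (Real.log_pos ht₁) hL hu.le
    hθ₀ hθ₁ hlog)
  have hθ' : 0 ≤ 1 - θ := sub_nonneg.mpr hθ₁
  gcongr
  exacts [key ht₀ h₀ hs₀, key ht₁ h₁ hs₁]

/-! ### Properties of `v` -/

theorem vfun_le {n d : ℕ} {f : (Fin n → ℝ) → ℝ} {t : ℝ} {g : MvPolynomial (Fin n) ℝ}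
    (hg : g.IsHomogeneous d) (hs : Hset f t ⊆ G1 g) : vfun n d f t ≤ volume (G1 g) :=
  iInf_le_of_le g (iInf_le_of_le hg (iInf_le _ hs))

theorem exists_volume_G1_lt {n d : ℕ} {f : (Fin n → ℝ) → ℝ} {t : ℝ} {a : ℝ≥0∞}
    (h : vfun n d f t < a) : ∃ g : MvPolynomial (Fin n) ℝ,
      g.IsHomogeneous d ∧ Hset f t ⊆ G1 g ∧ volume (G1 g) < a := by
  simpa only [vfun, iInf_lt_iff, exists_prop] using h

theorem vfun_antitone {n d : ℕ} {f : (Fin n → ℝ) → ℝ}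
    (hstar : ∀ c : ℝ, 0 ≤ c → c ≤ 1 → ∀ x, f x ≤ f (c • x))
    {t₀ t₁ : ℝ} (h₀ : 1 < t₀) (h : t₀ ≤ t₁) : vfun n d f t₁ ≤ vfun n d f t₀ :=
  le_iInf fun _ => le_iInf fun hg => le_iInf fun hs =>
    vfun_le hg ((Hset_antitone hstar h₀ h).trans hs)

theorem log_pow_mul_vfun_mono {n d : ℕ} {f : (Fin n → ℝ) → ℝ}
    (hstar : ∀ c : ℝ, 0 ≤ c → c ≤ 1 → ∀ x, f x ≤ f (c • x))
    {t₀ t₁ : ℝ} (h₀ : 1 < t₀) (h : t₀ ≤ t₁) :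
    ENNReal.ofReal (Real.log t₀ ^ n) * vfun n d f t₀ ≤
      ENNReal.ofReal (Real.log t₁ ^ n) * vfun n d f t₁ := by
  have hlog₀ := Real.log_pos h₀
  have hlog₁ := Real.log_pos (h₀.trans_le h)
  have hn : ENNReal.ofReal (Real.log t₁ ^ n) ≠ 0 := (ENNReal.ofReal_pos.mpr (by positivity)).ne'
  simp only [vfun, ENNReal.mul_iInf_of_ne hn ENNReal.ofReal_ne_top]
  refine le_iInf fun g => le_iInf fun hg => le_iInf fun hs => ?_
  set c := Real.log t₀ / Real.log t₁ with hc
  have hc₀ : 0 < c := by positivity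
  have hgc := hg.C_mul (c ^ d)
  have hscale : G1 (MvPolynomial.C (c ^ d) * g) = c⁻¹ • G1 g := by
    ext x
    rw [Set.mem_smul_set_iff_inv_smul_mem₀ (inv_ne_zero hc₀.ne'), inv_inv, mem_G1_iff,
      mem_G1_iff, hg.eval_smul, map_mul, MvPolynomial.eval_C]
  have hsub : Hset f t₀ ⊆ G1 (MvPolynomial.C (c ^ d) * g) := fun x hx => by
    rw [hscale, Set.mem_smul_set_iff_inv_smul_mem₀ (inv_ne_zero hc₀.ne'), inv_inv]
    exact hs (smul_mem_Hset hstar h₀ h hx)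
  calc ENNReal.ofReal (Real.log t₀ ^ n) * vfun n d f t₀
      ≤ ENNReal.ofReal (Real.log t₀ ^ n) * volume (G1 (MvPolynomial.C (c ^ d) * g)) := by
        gcongr
        exact vfun_le hgc hsub
    _ = ENNReal.ofReal (Real.log t₁ ^ n) * volume (G1 g) := by
        rw [hscale, volume_smul_fin (inv_pos.mpr hc₀), ← mul_assoc,
          ← ENNReal.ofReal_mul (by positivity), ← mul_pow, hc, inv_div,
          mul_div_cancel₀ _ hlog₀.ne']

theorem vfun_eq_zero_of {n d : ℕ} {f : (Fin n → ℝ) → ℝ}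
    (hstar : ∀ c : ℝ, 0 ≤ c → c ≤ 1 → ∀ x, f x ≤ f (c • x))
    {t₀ t₁ : ℝ} (h₀ : 1 < t₀) (h₁ : 1 < t₁) (h : vfun n d f t₀ = 0) : vfun n d f t₁ = 0 := by
  rcases le_total t₀ t₁ with hle | hle
  · exact le_zero_iff.mp (h ▸ vfun_antitone hstar h₀ hle)
  · have hmono := log_pow_mul_vfun_mono (d := d) hstar h₁ hle
    rw [h, mul_zero, le_zero_iff, mul_eq_zero] at hmono
    have := Real.log_pos h₁
    exact hmono.resolve_left (ENNReal.ofReal_pos.mpr (by positivity)).ne'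

theorem vfun_degree_zero {n : ℕ} {f : (Fin n → ℝ) → ℝ} (hf0 : f 0 = 1) {t : ℝ} (ht : 1 ≤ t) :
    vfun n 0 f t = volume (Set.univ : Set (Fin n → ℝ)) := by
  have huniv : G1 (0 : MvPolynomial (Fin n) ℝ) = Set.univ := by ext; simp [G1]
  refine le_antisymm ?_ (le_iInf fun g => le_iInf fun hg => le_iInf fun hs => ?_)
  · rw [← huniv]
    exact vfun_le (MvPolynomial.isHomogeneous_zero _ _ _) (by simp [huniv])
  · refine measure_mono fun x _ => ?_
    have h0 : MvPolynomial.eval 0 g ≤ 1 := hs (zero_mem_Hset hf0 ht)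
    have hx : MvPolynomial.eval 0 g = MvPolynomial.eval x g := by
      simpa using hg.eval_smul 0 x
    exact hx.ge.trans h0

theorem vfun_log_convex {n d : ℕ} {f : (Fin n → ℝ) → ℝ} (hf0 : f 0 = 1)
    (hstar : ∀ c : ℝ, 0 ≤ c → c ≤ 1 → ∀ x, f x ≤ f (c • x))
    {t₀ t₁ t θ : ℝ} (ht₀ : 1 < t₀) (ht₁ : 1 < t₁) (hθ₀ : 0 ≤ θ) (hθ₁ : θ ≤ 1) (ht : 1 ≤ t)
    (hlog : Real.log t ^ d = (1 - θ) * Real.log t₀ ^ d + θ * Real.log t₁ ^ d) :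
    vfun n d f t ≤ vfun n d f t₀ ^ (1 - θ) * vfun n d f t₁ ^ θ := by
  rcases eq_or_ne d 0 with rfl | hd
  · rw [vfun_degree_zero hf0 ht, vfun_degree_zero hf0 ht₀.le, vfun_degree_zero hf0 ht₁.le,
      ← ENNReal.rpow_add_of_nonneg _ _ (sub_nonneg.mpr hθ₁) hθ₀, sub_add_cancel,
      ENNReal.rpow_one]
  have hunique : ∀ s : ℝ, 1 < s → Real.log t ^ d = Real.log s ^ d → t = s := fun s hs h =>
    Real.log_injOn_pos (Set.mem_Ioi.mpr (by linarith)) (Set.mem_Ioi.mpr (by linarith))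
      ((pow_left_inj₀ (Real.log_nonneg ht) (Real.log_pos hs).le hd).mp h)
  rcases hθ₀.eq_or_lt with rfl | hθ₀
  · rw [hunique t₀ ht₀ (by simpa using hlog)]
    simp
  rcases hθ₁.eq_or_lt with rfl | hθ₁
  · rw [hunique t₁ ht₁ (by simpa using hlog)]
    simp
  have hθ' : 0 < 1 - θ := sub_pos.mpr hθ₁
  refine ENNReal.le_mul_of_forall_lt ?_ ?_ fun a ha b hb => ?_
  · by_contra! hne
    have hzero := (ENNReal.rpow_eq_zero_iff_of_pos hθ').mp hne.1
    rw [vfun_eq_zero_of hstar ht₀ ht₁ hzero, ENNReal.zero_rpow_of_pos hθ₀] at hne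
    exact ENNReal.zero_ne_top hne.2
  · by_contra! hne
    have hzero := (ENNReal.rpow_eq_zero_iff_of_pos hθ₀).mp hne.2
    rw [vfun_eq_zero_of hstar ht₁ ht₀ hzero, ENNReal.zero_rpow_of_pos hθ'] at hne
    exact ENNReal.zero_ne_top hne.1
  obtain ⟨g₀, hg₀, hs₀, hv₀⟩ := exists_volume_G1_lt ((ENNReal.lt_rpow_inv_iff hθ').mpr ha)
  obtain ⟨g₁, hg₁, hs₁, hv₁⟩ := exists_volume_G1_lt ((ENNReal.lt_rpow_inv_iff hθ₀).mpr hb)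
  calc vfun n d f t
      ≤ volume (G1 (MvPolynomial.C (1 - θ) * g₀ + MvPolynomial.C θ * g₁)) :=
        vfun_le ((hg₀.C_mul _).add (hg₁.C_mul _))
          (Hset_subset_G1_combination hd hg₀ hg₁ ht₀ ht₁ ht hθ₀.le hθ₁.le hlog hs₀ hs₁)
    _ ≤ volume (G1 g₀) ^ (1 - θ) * volume (G1 g₁) ^ θ :=
        volume_G1_combination_le hd hg₀ hg₁ hθ₀ hθ₁
    _ ≤ a * b :=
        mul_le_mul' ((ENNReal.lt_rpow_inv_iff hθ').mp hv₀).le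
          ((ENNReal.lt_rpow_inv_iff hθ₀).mp hv₁).le

/-- Lemma 3.8 of the paper: (a) `v` is non-increasing on `(1,∞)`;
(b) `t ↦ (log t)ⁿ v(t)` is non-decreasing on `(1,∞)`;
(c) `v(t_θ) ≤ v(t₀)^{1-θ} v(t₁)^θ` where `(log t_θ)^d = (1-θ)(log t₀)^d + θ(log t₁)^d`. -/
theorem stmt_16 (n d : ℕ) (hd : Even d)
    (f : (Fin n → ℝ) → ℝ) (hf_nonneg : ∀ x, 0 ≤ f x)
    (hf_int : Integrable f) (hf_pos : 0 < ∫ x, f x)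
    (hf_lc : ∀ x y : Fin n → ℝ, ∀ θ : ℝ, 0 ≤ θ → θ ≤ 1 →
      f x ^ (1 - θ) * f y ^ θ ≤ f ((1 - θ) • x + θ • y))
    (hf_le : ∀ x, f x ≤ 1) (hf0 : f 0 = 1) :
    (∀ t₀ t₁ : ℝ, 1 < t₀ → t₀ ≤ t₁ → vfun n d f t₁ ≤ vfun n d f t₀) ∧
    (∀ t₀ t₁ : ℝ, 1 < t₀ → t₀ ≤ t₁ →
      ENNReal.ofReal (Real.log t₀ ^ n) * vfun n d f t₀ ≤
        ENNReal.ofReal (Real.log t₁ ^ n) * vfun n d f t₁) ∧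
    (∀ t₀ t₁ tθ θ : ℝ, 1 < t₀ → 1 < t₁ → 0 ≤ θ → θ ≤ 1 → 1 ≤ tθ →
      Real.log tθ ^ d = (1 - θ) * Real.log t₀ ^ d + θ * Real.log t₁ ^ d →
      vfun n d f tθ ≤ vfun n d f t₀ ^ (1 - θ) * vfun n d f t₁ ^ θ) := by
  have hstar : ∀ c : ℝ, 0 ≤ c → c ≤ 1 → ∀ x, f x ≤ f (c • x) := fun c hc₀ hc₁ =>
    le_smul_of_logConcave hf_nonneg hf_lc hf_le hf0 hc₀ hc₁
  exact ⟨fun _ _ => vfun_antitone hstar, fun _ _ => log_pow_mul_vfun_mono hstar,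
    fun _ _ _ _ => vfun_log_convex hf0 hstar⟩
end
end
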